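/- (Duffin) Let D be a domain in ℝ² and let u ∈ C²(D) satisfy the modified Helmholtz (Yukawa) equation ∇²u − μ²u = 0 in D for some μ ≠ 0. Then for every x ∈ D and every r > 0 such that the closed ball of radius r centred at x is contained in D, the spherical (circular) mean satisfies M(x, r, u) = u(x) · (1/π) ∫_0^π cosh(μr cos θ) dθ, i.e. M(x, r, u) = I_0(μr) u(x) where I_0 is the modified Bessel function of order zero. -/

import Mathlib

open MeasureTheory Metric

/-- The spherical mean `M(x, r, u) = (1/ω_m) ∫_{S_1(0)} u(x + r y) dS_y`,
realized as the average of `y ↦ u (x + r • y)` over the unit sphere with respect to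
the `(m-1)`-dimensional Hausdorff (surface-area) measure. -/
noncomputable def sphereMean (m : ℕ) (u : EuclideanSpace ℝ (Fin m) → ℝ)
    (x : EuclideanSpace ℝ (Fin m)) (r : ℝ) : ℝ :=
  ⨍ y in sphere (0 : EuclideanSpace ℝ (Fin m)) 1, u (x + r • y) ∂μH[(m : ℝ) - 1]

/-- The iterated spherical mean
`I(x, r', r, u) = (1/ω_m²) ∫_{S_1(0)} ∫_{S_1(0)} u(x + r' y + r z) dS_z dS_y`. -/
noncomputable def iterSphereMean (m : ℕ) (u : EuclideanSpace ℝ (Fin m) → ℝ)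
    (x : EuclideanSpace ℝ (Fin m)) (r' r : ℝ) : ℝ :=
  ⨍ y in sphere (0 : EuclideanSpace ℝ (Fin m)) 1,
    ⨍ z in sphere (0 : EuclideanSpace ℝ (Fin m)) 1,
      u (x + r' • y + r • z) ∂μH[(m : ℝ) - 1] ∂μH[(m : ℝ) - 1]

/-- The Laplacian `∇²u (x) = ∑ i ∂²u/∂x_i² (x)`. -/
noncomputable def laplacian (m : ℕ) (u : EuclideanSpace ℝ (Fin m) → ℝ)
    (x : EuclideanSpace ℝ (Fin m)) : ℝ :=
  ∑ i : Fin m, fderiv ℝ (fun y => fderiv ℝ u y (EuclideanSpace.single i 1)) x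
    (EuclideanSpace.single i 1)

/-!
Write `A s` for the average of `u` over the circle of radius `s` about `c`. In polar coordinates
`s² Δ = (s ∂ₛ)² + ∂_θ²`, and angular derivatives average to zero, so `P = s A'` satisfies
`P' = μ² s A`. The energy `P² - μ² s² A²` is nonincreasing and starts at `0`, hence
`|A'| ≤ |μ| |A|`, and Grönwall shows that a solution vanishing at `c` has all its averages about
`c` equal to zero. Applied to `u z - u c * cosh (μ * re (z - c))`, this reduces the theorem to the
one-dimensional solution, whose circle averages are the Bessel integral. The average with respect to
Hausdorff measure is the average over the angle because both come from rotation-invariant measures,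
which are unique up to scale.
-/

open Set Filter Topology Real
open Complex (I normSq)
open scoped Laplacian

section Calculus

theorem hasDerivAt_intervalIntegral_of_continuousOn {E : Type*} [NormedAddCommGroup E]
    [NormedSpace ℝ E] {F F' : ℝ → ℝ → E} {U : Set ℝ} {a b s : ℝ} (hU : IsOpen U)
    (hF : ContinuousOn F.uncurry (U ×ˢ uIcc a b)) (hF' : ContinuousOn F'.uncurry (U ×ˢ uIcc a b))
    (hderiv : ∀ t ∈ U, ∀ θ ∈ uIcc a b, HasDerivAt (F · θ) (F' t θ) t) (hs : s ∈ U) :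
    HasDerivAt (fun t ↦ ∫ θ in a..b, F t θ) (∫ θ in a..b, F' s θ) s := by
  have slice_continuousOn {G : ℝ → ℝ → E} (hG : ContinuousOn G.uncurry (U ×ˢ uIcc a b)) {t : ℝ}
      (ht : t ∈ U) : ContinuousOn (G t) (uIcc a b) :=
    hG.comp (f := fun θ ↦ (t, θ)) (by fun_prop) fun θ hθ ↦ ⟨ht, hθ⟩
  have slice_aestronglyMeasurable {G : ℝ → ℝ → E}
      (hG : ContinuousOn G.uncurry (U ×ˢ uIcc a b)) {t : ℝ} (ht : t ∈ U) :
      AEStronglyMeasurable (G t) (volume.restrict (uIoc a b)) :=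
    ((slice_continuousOn hG ht).mono uIoc_subset_uIcc).aestronglyMeasurable measurableSet_uIoc
  obtain ⟨δ, hδ, hball⟩ := nhds_basis_closedBall.mem_iff.mp (hU.mem_nhds hs)
  obtain ⟨C, hC⟩ := ((isCompact_closedBall s δ).prod isCompact_uIcc).exists_bound_of_continuousOn
    (hF'.mono (prod_mono_left hball))
  refine (intervalIntegral.hasDerivAt_integral_of_dominated_loc_of_deriv_le
    (bound := fun _ ↦ C) (closedBall_mem_nhds s hδ) ?_
    (slice_continuousOn hF hs).intervalIntegrable (slice_aestronglyMeasurable hF' hs) ?_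
    intervalIntegrable_const ?_).2
  · filter_upwards [hU.mem_nhds hs] with t ht using slice_aestronglyMeasurable hF ht
  · exact ae_of_all _ fun θ hθ t ht ↦ hC (t, θ) ⟨ht, uIoc_subset_uIcc hθ⟩
  · exact ae_of_all _ fun θ hθ t ht ↦ hderiv t (hball ht) θ (uIoc_subset_uIcc hθ)

/- Mathlib's Grönwall lemmas ask for a right derivative at `a` too, where the circle averages are
not known to be differentiable. -/
theorem eq_zero_of_abs_deriv_le_mul_abs_Ioo {f f' : ℝ → ℝ} {a b K : ℝ}
    (hf : ContinuousOn f (Icc a b)) (hf' : ∀ s ∈ Ioo a b, HasDerivAt f (f' s) s)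
    (hbound : ∀ s ∈ Ioo a b, |f' s| ≤ K * |f s|) (hfa : f a = 0) :
    ∀ s ∈ Icc a b, f s = 0 := by
  have hderiv : ∀ s ∈ Ioo a b, HasDerivAt (fun t ↦ exp (-(2 * K) * t) * f t ^ 2)
      (2 * exp (-(2 * K) * s) * (f s * f' s - K * f s ^ 2)) s := fun s hs ↦ by
    refine ((((hasDerivAt_id s).const_mul (-(2 * K))).exp).mul ((hf' s hs).pow 2)).congr_deriv ?_
    simp only [id_eq, Pi.pow_apply]
    ring
  have hanti : AntitoneOn (fun t ↦ exp (-(2 * K) * t) * f t ^ 2) (Icc a b) := by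
    refine antitoneOn_of_hasDerivWithinAt_nonpos (convex_Icc a b) (by fun_prop)
      (fun s hs ↦ (hderiv s (by simpa using hs)).hasDerivWithinAt) fun s hs ↦ ?_
    rw [interior_Icc] at hs
    have hle : f s * f' s ≤ K * f s ^ 2 := calc
      f s * f' s ≤ |f s| * |f' s| := (le_abs_self _).trans_eq (abs_mul _ _)
      _ ≤ |f s| * (K * |f s|) := by gcongr; exact hbound s hs
      _ = K * f s ^ 2 := by rw [← sq_abs (f s)]; ring
    exact mul_nonpos_of_nonneg_of_nonpos (by positivity) (by linarith)
  intro s hs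
  have hle := hanti (left_mem_Icc.2 (hs.1.trans hs.2)) hs hs.1
  simp only [hfa, ne_eq, OfNat.ofNat_ne_zero, not_false_eq_true, zero_pow, mul_zero] at hle
  have hsq : f s ^ 2 ≤ 0 := nonpos_of_mul_nonpos_right hle (exp_pos _)
  exact pow_eq_zero_iff two_ne_zero |>.1 (hsq.antisymm (sq_nonneg _))

/- Uniqueness for `(w f')' = k w f`, where `p = w f'` and `w` may vanish at `a`: the energy
`p² - k (w f)²` is nonincreasing, so `|f'| ≤ √k |f|`. -/
theorem eq_zero_of_hasDerivAt_div_of_hasDerivAt_mul {f p w w' : ℝ → ℝ} {a b k : ℝ} (hk : 0 ≤ k)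
    (hf : ContinuousOn f (Icc a b)) (hp : ContinuousOn p (Ico a b))
    (hw : ContinuousOn w (Ico a b)) (hw_pos : ∀ s ∈ Ioo a b, 0 < w s)
    (hw' : ∀ s ∈ Ioo a b, HasDerivAt w (w' s) s) (hw'_nonneg : ∀ s ∈ Ioo a b, 0 ≤ w' s)
    (hf' : ∀ s ∈ Ioo a b, HasDerivAt f (p s / w s) s)
    (hp' : ∀ s ∈ Ioo a b, HasDerivAt p (k * w s * f s) s)
    (hfa : f a = 0) (hpa : p a = 0) :
    ∀ s ∈ Icc a b, f s = 0 := by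
  have hderiv : ∀ s ∈ Ioo a b, HasDerivAt (fun t ↦ p t ^ 2 - k * (w t * f t) ^ 2)
      (-(2 * k * w s * w' s * f s ^ 2)) s := fun s hs ↦ by
    refine (((hp' s hs).pow 2).sub
      ((((hw' s hs).mul (hf' s hs)).pow 2).const_mul k)).congr_deriv ?_
    have := (hw_pos s hs).ne'
    simp only [Pi.mul_apply]
    field_simp
    ring
  have hanti : AntitoneOn (fun t ↦ p t ^ 2 - k * (w t * f t) ^ 2) (Ico a b) := by
    have hf_Ico := hf.mono Ico_subset_Icc_self
    refine antitoneOn_of_hasDerivWithinAt_nonpos (convex_Ico a b) (by fun_prop)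
      (fun s hs ↦ (hderiv s (by simpa using hs)).hasDerivWithinAt) fun s hs ↦ ?_
    rw [interior_Ico] at hs
    have := (hw_pos s hs).le
    have := hw'_nonneg s hs
    exact neg_nonpos.2 (by positivity)
  refine eq_zero_of_abs_deriv_le_mul_abs_Ioo (K := √k) hf hf' (fun s hs ↦ ?_) hfa
  have hp_sq : p s ^ 2 ≤ k * (w s * f s) ^ 2 := by
    have := hanti ⟨le_rfl, hs.1.trans hs.2⟩ (Ioo_subset_Ico_self hs) hs.1.le
    simp only [hfa, hpa] at this
    linarith
  calc |p s / w s| = √(p s ^ 2) / w s := by rw [abs_div, abs_of_pos (hw_pos s hs), sqrt_sq_eq_abs]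
    _ ≤ √(k * (w s * f s) ^ 2) / w s := by gcongr; exact (hw_pos s hs).le
    _ = √k * |f s| := by
      rw [sqrt_mul hk, sqrt_sq_eq_abs, abs_mul, abs_of_pos (hw_pos s hs)]
      field_simp [(hw_pos s hs).ne']

end Calculus

section SpiralDeriv

variable {F : Type*} [NormedAddCommGroup F] [NormedSpace ℝ F]

/-- The derivative of `f : ℂ → F` along the linear vector field `z ↦ a * (z - c)`. In polar
coordinates `(r, θ)` about `c` it is `r ∂/∂r` for `a = 1` and `∂/∂θ` for `a = I`. -/
noncomputable def spiralDeriv (a c : ℂ) (f : ℂ → F) (z : ℂ) : F :=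
  fderiv ℝ f z (a * (z - c))

theorem contDiffOn_spiralDeriv {m n : WithTop ℕ∞} {a c : ℂ} {f : ℂ → F} {U : Set ℂ}
    (hf : ContDiffOn ℝ n f U) (hU : IsOpen U) (hmn : m + 1 ≤ n) :
    ContDiffOn ℝ m (spiralDeriv a c f) U :=
  (hf.fderiv_of_isOpen hU hmn).clm_apply (by fun_prop)

theorem spiralDeriv_spiralDeriv {a c : ℂ} {f : ℂ → F} {z : ℂ} (hf : ContDiffAt ℝ 2 f z) :
    spiralDeriv a c (spiralDeriv a c f) z =
      iteratedFDeriv ℝ 2 f z ![a * (z - c), a * (z - c)] + fderiv ℝ f z (a * (a * (z - c))) := by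
  have hdf : DifferentiableAt ℝ (fderiv ℝ f) z :=
    (hf.fderiv_right (m := 1) le_rfl).differentiableAt one_ne_zero
  have hfield : HasFDerivAt (fun w ↦ a * (w - c)) (a • ContinuousLinearMap.id ℝ ℂ) z :=
    ((hasFDerivAt_id z).sub_const c).const_mul a
  unfold spiralDeriv
  rw [(hdf.hasFDerivAt.clm_apply hfield).fderiv, iteratedFDeriv_two_apply]
  simp [add_comm]

theorem normSq_smul_laplacian (f : ℂ → F) (z w : ℂ) :
    normSq w • Δ f z =
      iteratedFDeriv ℝ 2 f z ![w, w] + iteratedFDeriv ℝ 2 f z ![I * w, I * w] := by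
  obtain ⟨x, y⟩ := w
  have hw : (⟨x, y⟩ : ℂ) = x • (1 : ℂ) + y • I := by apply Complex.ext <;> simp
  have hIw : I * ⟨x, y⟩ = (-y) • (1 : ℂ) + x • I := by apply Complex.ext <;> simp
  rw [InnerProductSpace.laplacian_eq_iteratedFDeriv_complexPlane, hIw, Complex.normSq_mk, hw]
  simp only [iteratedFDeriv_two_apply, Matrix.cons_val_zero, Matrix.cons_val_one, map_add, map_smul,
    add_apply, smul_apply]
  module

theorem spiralDeriv_one_add_spiralDeriv_I {c : ℂ} {f : ℂ → F} {z : ℂ} (hf : ContDiffAt ℝ 2 f z) :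
    spiralDeriv 1 c (spiralDeriv 1 c f) z + spiralDeriv I c (spiralDeriv I c f) z =
      normSq (z - c) • Δ f z := by
  rw [spiralDeriv_spiralDeriv hf, spiralDeriv_spiralDeriv hf, normSq_smul_laplacian]
  have hI : I * (I * (z - c)) = -(z - c) := by rw [← mul_assoc, Complex.I_mul_I, neg_one_mul]
  simp only [one_mul, hI, map_neg]
  abel

end SpiralDeriv

section CircleAverage

variable {F : Type*} [NormedAddCommGroup F] [NormedSpace ℝ F] {c : ℂ} {R s : ℝ}

theorem hasDerivAt_circleAverage {g : ℂ → F} (hg : ContDiffOn ℝ 1 g (ball c R))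
    (hs : s ∈ Ioo 0 R) :
    HasDerivAt (circleAverage g c) (s⁻¹ • circleAverage (spiralDeriv 1 c g) c s) s := by
  have hmem (t : ℝ) (ht : t ∈ Ioo 0 R) (θ : ℝ) : circleMap c t θ ∈ ball c R :=
    sphere_subset_ball ht.2 (circleMap_mem_sphere c ht.1.le θ)
  have hmaps : MapsTo (fun p : ℝ × ℝ ↦ circleMap c p.1 p.2) (Ioo 0 R ×ˢ uIcc 0 (2 * π))
      (ball c R) := fun p hp ↦ hmem p.1 hp.1 p.2
  have hcirc : ContinuousOn (fun p : ℝ × ℝ ↦ circleMap c p.1 p.2)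
      (Ioo 0 R ×ˢ uIcc 0 (2 * π)) := by fun_prop
  have hradial (t θ : ℝ) (ht : t ∈ Ioo 0 R) : HasDerivAt (fun t ↦ g (circleMap c t θ))
      (t⁻¹ • spiralDeriv 1 c g (circleMap c t θ)) t := by
    have hg' := (hg.differentiableOn one_ne_zero).differentiableAt
      (isOpen_ball.mem_nhds (hmem t ht θ))
    have hline : HasDerivAt (fun t ↦ circleMap c t θ) (t⁻¹ • (circleMap c t θ - c)) t := by
      refine (((hasDerivAt_id t).ofReal_comp.mul_const _).const_add c).congr_deriv ?_
      have := Complex.ofReal_ne_zero.2 ht.1.ne'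
      simp [circleMap, this]
    refine (hg'.hasFDerivAt.comp_hasDerivAt t hline).congr_deriv ?_
    rw [map_smul, spiralDeriv, one_mul]
  have hdiff := hasDerivAt_intervalIntegral_of_continuousOn isOpen_Ioo
    (F := fun t θ ↦ g (circleMap c t θ))
    (F' := fun t θ ↦ t⁻¹ • spiralDeriv 1 c g (circleMap c t θ)) (hg.continuousOn.comp hcirc hmaps)
    (((continuousOn_fst).inv₀ fun p hp ↦ hp.1.1.ne').smul
      ((contDiffOn_spiralDeriv (m := 0) hg isOpen_ball le_rfl).continuousOn.comp hcirc hmaps))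
    (fun t ht θ _ ↦ hradial t θ ht) hs
  refine (hdiff.const_smul (2 * π)⁻¹).congr_deriv ?_
  rw [intervalIntegral.integral_smul, smul_comm, circleAverage_def]

theorem circleAverage_spiralDeriv_I [CompleteSpace F] {g : ℂ → F} {U : Set ℂ} (hU : IsOpen U)
    (hg : ContDiffOn ℝ 1 g U) (hsub : sphere c |s| ⊆ U) :
    circleAverage (spiralDeriv I c g) c s = 0 := by
  have hmem (θ : ℝ) : circleMap c s θ ∈ U := hsub (circleMap_mem_sphere' c s θ)
  have hangular (θ : ℝ) : HasDerivAt (fun θ ↦ g (circleMap c s θ))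
      (spiralDeriv I c g (circleMap c s θ)) θ := by
    have hg' := (hg.differentiableOn one_ne_zero).differentiableAt (hU.mem_nhds (hmem θ))
    refine (hg'.hasFDerivAt.comp_hasDerivAt θ (hasDerivAt_circleMap c s θ)).congr_deriv ?_
    rw [spiralDeriv, circleMap_sub_center, mul_comm]
  have hcont : Continuous fun θ ↦ spiralDeriv I c g (circleMap c s θ) :=
    (contDiffOn_spiralDeriv (m := 0) hg hU le_rfl).continuousOn.comp_continuous
      (continuous_circleMap c s) hmem
  rw [circleAverage_def, intervalIntegral.integral_eq_sub_of_hasDerivAt (fun θ _ ↦ hangular θ)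
    (hcont.intervalIntegrable _ _), (periodic_circleMap c s).eq, sub_self, smul_zero]

theorem hasDerivAt_circleAverage_spiralDeriv_one [CompleteSpace F] {f : ℂ → F}
    (hf : ContDiffOn ℝ 2 f (ball c R)) (hs : s ∈ Ioo 0 R) :
    HasDerivAt (circleAverage (spiralDeriv 1 c f) c) (s • circleAverage (Δ f) c s) s := by
  have hspiral (a : ℂ) : ContDiffOn ℝ 1 (spiralDeriv a c f) (ball c R) :=
    contDiffOn_spiralDeriv hf isOpen_ball le_rfl
  have hsphere : sphere c |s| ⊆ ball c R := by
    rw [abs_of_pos hs.1]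
    exact sphere_subset_ball hs.2
  have hint (a : ℂ) : CircleIntegrable (spiralDeriv a c (spiralDeriv a c f)) c s :=
    ((contDiffOn_spiralDeriv (m := 0) (hspiral a) isOpen_ball le_rfl).continuousOn.mono
      hsphere).circleIntegrable'
  refine (hasDerivAt_circleAverage (hspiral 1) hs).congr_deriv ?_
  calc s⁻¹ • circleAverage (spiralDeriv 1 c (spiralDeriv 1 c f)) c s
    _ = s⁻¹ • circleAverage (spiralDeriv 1 c (spiralDeriv 1 c f) +
          spiralDeriv I c (spiralDeriv I c f)) c s := by
      rw [circleAverage_add (hint 1) (hint I),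
        circleAverage_spiralDeriv_I isOpen_ball (hspiral I) hsphere, add_zero]
    _ = s⁻¹ • circleAverage (fun z ↦ s ^ 2 • Δ f z) c s := by
      congr 1
      refine circleAverage_congr_sphere fun z hz ↦ ?_
      rw [Pi.add_apply, spiralDeriv_one_add_spiralDeriv_I
        (hf.contDiffAt (isOpen_ball.mem_nhds (hsphere hz))), Complex.normSq_eq_norm_sq,
        mem_sphere_iff_norm.1 hz, sq_abs]
    _ = s • circleAverage (Δ f) c s := by
      rw [circleAverage_fun_smul, smul_smul, sq, inv_mul_cancel_left₀ hs.1.ne']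

end CircleAverage

section MeanValue

/-- The modified Bessel function `I₀` of the first kind, by its integral representation. -/
noncomputable def besselIZero (z : ℝ) : ℝ :=
  (1 / π) * ∫ θ in (0 : ℝ)..π, cosh (z * cos θ)

theorem circleAverage_cosh_re_sub (μ : ℝ) (c : ℂ) (r : ℝ) :
    circleAverage (fun z ↦ cosh (μ * (z.re - c.re))) c r = besselIZero (μ * r) := by
  have hre (θ : ℝ) : μ * ((circleMap c r θ).re - c.re) = μ * r * cos θ := by
    simp [circleMap, Complex.exp_ofReal_mul_I_re, mul_assoc]
  have hint (a b : ℝ) : IntervalIntegrable (fun θ ↦ cosh (μ * r * cos θ)) volume a b :=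
    Continuous.intervalIntegrable (by fun_prop) _ _
  have hper : Function.Periodic (fun θ ↦ cosh (μ * r * cos θ)) π := fun θ ↦ by
    simp only [cos_add_pi, mul_neg, cosh_neg]
  have hhalf : ∫ θ in π..2 * π, cosh (μ * r * cos θ) = ∫ θ in 0..π, cosh (μ * r * cos θ) := by
    simpa only [zero_add, two_mul] using (hper.intervalIntegral_add_eq 0 π).symm
  simp only [circleAverage_def, hre, smul_eq_mul, besselIZero]
  rw [← intervalIntegral.integral_add_adjacent_intervals (hint 0 π) (hint π _), hhalf]
  field_simp
  ring

theorem laplacian_comp_re {F : Type*} [NormedAddCommGroup F] [NormedSpace ℝ F] {g : ℝ → F}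
    (hg : ContDiff ℝ 2 g) (z : ℂ) :
    Δ (fun w : ℂ ↦ g w.re) z = iteratedDeriv 2 g z.re := by
  have h := Complex.reCLM.iteratedFDeriv_comp_right hg z (i := 2) le_rfl
  rw [InnerProductSpace.laplacian_eq_iteratedFDeriv_complexPlane]
  change iteratedFDeriv ℝ 2 (g ∘ Complex.reCLM) z _ + iteratedFDeriv ℝ 2 (g ∘ Complex.reCLM) z _ = _
  rw [h]
  simp [iteratedFDeriv_apply_eq_iteratedDeriv_mul_prod]

theorem laplacian_cosh_re_sub (μ a : ℝ) (z : ℂ) :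
    Δ (fun w : ℂ ↦ cosh (μ * (w.re - a))) z = μ ^ 2 * cosh (μ * (z.re - a)) := by
  have hderiv : deriv (fun t ↦ cosh (μ * (t - a))) = fun t ↦ μ * sinh (μ * (t - a)) := by
    funext t
    refine (((hasDerivAt_id t).sub_const a).const_mul μ).cosh.deriv.trans ?_
    simp [mul_comm]
  have hderiv' : deriv (fun t ↦ μ * sinh (μ * (t - a))) z.re = μ ^ 2 * cosh (μ * (z.re - a)) := by
    refine ((((hasDerivAt_id z.re).sub_const a).const_mul μ).sinh.const_mul μ).deriv.trans ?_
    simp only [id_eq]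
    ring
  rw [laplacian_comp_re (g := fun t ↦ cosh (μ * (t - a))) (by fun_prop), iteratedDeriv_succ,
    iteratedDeriv_one, hderiv, hderiv']

theorem circleAverage_eq_zero_of_laplacian_eq_sq_mul {f : ℂ → ℝ} {c : ℂ} {r μ : ℝ} (hr : 0 ≤ r)
    (hf : ContinuousOn f (closedBall c r)) (hf' : ContDiffOn ℝ 2 f (ball c r))
    (hΔ : ∀ z ∈ ball c r, Δ f z = μ ^ 2 * f z) (hfc : f c = 0) :
    circleAverage f c r = 0 := by
  have hradial : ContDiffOn ℝ 1 (spiralDeriv 1 c f) (ball c r) :=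
    contDiffOn_spiralDeriv hf' isOpen_ball le_rfl
  refine eq_zero_of_hasDerivAt_div_of_hasDerivAt_mul (f := circleAverage f c)
    (p := circleAverage (spiralDeriv 1 c f) c) (w := id) (w' := 1) (sq_nonneg μ)
    (ContinuousOn.circleAverage (hf.mono fun z hz ↦ ?_) fun s hs ↦ hs.1)
    (ContinuousOn.circleAverage (hradial.continuousOn.mono fun z hz ↦ ?_) fun s hs ↦ hs.1)
    continuousOn_id (fun s hs ↦ hs.1) (fun s _ ↦ hasDerivAt_id s) (fun _ _ ↦ zero_le_one)
    (fun s hs ↦ ?_) (fun s hs ↦ ?_) ?_ ?_ r (right_mem_Icc.2 hr)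
  · exact mem_closedBall_iff_norm.2 hz.2
  · exact mem_ball_iff_norm.2 hz.2
  · simpa [div_eq_inv_mul] using hasDerivAt_circleAverage (hf'.of_le one_le_two) hs
  · refine (hasDerivAt_circleAverage_spiralDeriv_one hf' hs).congr_deriv ?_
    have hcongr : circleAverage (Δ f) c s = circleAverage (fun z ↦ μ ^ 2 • f z) c s :=
      circleAverage_congr_sphere fun z hz ↦ hΔ z
        (sphere_subset_ball hs.2 (by rwa [abs_of_pos hs.1] at hz))
    rw [hcongr, circleAverage_fun_smul]
    simp only [smul_eq_mul, id_eq]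
    ring
  · rw [circleAverage_zero, hfc]
  · rw [circleAverage_zero, spiralDeriv, sub_self, mul_zero, map_zero]

theorem circleAverage_eq_mul_besselIZero {u : ℂ → ℝ} {c : ℂ} {r μ : ℝ} (hr : 0 ≤ r)
    (hu : ContinuousOn u (closedBall c r)) (hu' : ContDiffOn ℝ 2 u (ball c r))
    (hΔ : ∀ z ∈ ball c r, Δ u z = μ ^ 2 * u z) :
    circleAverage u c r = u c * besselIZero (μ * r) := by
  set v : ℂ → ℝ := fun z ↦ cosh (μ * (z.re - c.re)) with hv
  have hv_smooth : ContDiff ℝ 2 v := by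
    have := Complex.reCLM.contDiff (n := 2)
    exact (contDiff_const.mul (this.sub contDiff_const)).cosh
  have hcv_smooth : ContDiff ℝ 2 (u c • v) := hv_smooth.const_smul (u c)
  have huv : circleAverage (u - u c • v) c r = 0 := by
    refine circleAverage_eq_zero_of_laplacian_eq_sq_mul (μ := μ) hr
      (hu.sub hcv_smooth.continuous.continuousOn) (hu'.sub hcv_smooth.contDiffOn)
      (fun z hz ↦ ?_) (by simp [hv])
    rw [(hu'.contDiffAt (isOpen_ball.mem_nhds hz)).laplacian_sub hcv_smooth.contDiffAt,
      InnerProductSpace.laplacian_smul _ hv_smooth.contDiffAt, hΔ z hz, hv,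
      laplacian_cosh_re_sub]
    simp only [Pi.sub_apply, Pi.smul_apply, smul_eq_mul]
    ring
  rw [circleAverage_sub (hu.mono sphere_subset_closedBall |>.circleIntegrable hr)
    (hcv_smooth.continuous.continuousOn.circleIntegrable hr), circleAverage_smul,
    circleAverage_cosh_re_sub, sub_eq_zero] at huv
  exact huv

end MeanValue

section UnitCircle

/-- The parametrization `t ↦ exp (i t)` of the unit circle by the compact group `ℝ / 2πℤ`, along
which Haar measure is transported to `ℂ`. -/
noncomputable def angleExp (t : AddCircle (2 * π)) : ℂ :=
  AddCircle.homeomorphCircle' t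

theorem angleExp_coe (θ : ℝ) : angleExp θ = circleMap 0 1 θ := by
  simp [angleExp, circleMap, AddCircle.homeomorphCircle'_apply_mk]

theorem angleExp_add (s t : AddCircle (2 * π)) : angleExp (s + t) = angleExp s * angleExp t :=
  congrArg ((↑) : Circle → ℂ) (Real.Angle.toCircle_add s t)

theorem range_angleExp : range angleExp = sphere 0 1 :=
  (AddCircle.homeomorphCircle'.surjective.range_comp _).trans Subtype.range_coe

theorem measurableEmbedding_angleExp : MeasurableEmbedding angleExp :=
  have : Fact (0 < 2 * π) := ⟨two_pi_pos⟩
  ((continuous_subtype_val.comp AddCircle.homeomorphCircle'.continuous).isClosedEmbedding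
    (Subtype.val_injective.comp AddCircle.homeomorphCircle'.injective)).measurableEmbedding

theorem isAddLeftInvariant_comap_angleExp {m : Measure ℂ}
    (hm : ∀ a : Circle, MeasurePreserving (fun z : ℂ ↦ a * z) m m) :
    (m.comap angleExp).IsAddLeftInvariant := by
  refine ⟨fun t ↦ Measure.ext fun s hs ↦ ?_⟩
  have himage : angleExp '' ((t + ·) ⁻¹' s) =
      (fun z ↦ angleExp t * z) ⁻¹' (angleExp '' s) := by
    refine Subset.antisymm ?_ ?_
    · rintro _ ⟨x, hx, rfl⟩
      exact ⟨t + x, hx, angleExp_add t x⟩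
    · rintro z ⟨y, hy, hyz⟩
      have hy_eq : angleExp t * angleExp (-t + y) = angleExp t * z := by
        rw [← angleExp_add, add_neg_cancel_left, hyz]
      exact ⟨-t + y, by simpa using hy,
        mul_left_cancel₀ (AddCircle.homeomorphCircle' t).coe_ne_zero hy_eq⟩
  rw [Measure.map_apply (measurable_const_add t) hs, measurableEmbedding_angleExp.comap_apply,
    measurableEmbedding_angleExp.comap_apply, himage]
  exact (hm (AddCircle.homeomorphCircle' t)).measure_preimage
    (measurableEmbedding_angleExp.measurableSet_image.2 hs).nullMeasurableSet

theorem setAverage_sphere_eq_circleAverage {E : Type*} [NormedAddCommGroup E] [NormedSpace ℝ E]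
    {m : Measure ℂ} (hm : ∀ a : Circle, MeasurePreserving (fun z : ℂ ↦ a * z) m m)
    (hpos : m (sphere 0 1) ≠ 0) (hfin : m (sphere 0 1) ≠ ⊤) (f : ℂ → E) :
    ⨍ z in sphere 0 1, f z ∂m = circleAverage f 0 1 := by
  have : Fact (0 < 2 * π) := ⟨two_pi_pos⟩
  have := isAddLeftInvariant_comap_angleExp hm
  have huniv : m.comap angleExp univ = m (sphere 0 1) := by
    rw [measurableEmbedding_angleExp.comap_apply, image_univ, range_angleExp]
  have : IsFiniteMeasure (m.comap angleExp) := ⟨by rw [huniv]; exact hfin.lt_top⟩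
  obtain ⟨k, hk⟩ : ∃ k : NNReal, m.comap angleExp = k • volume :=
    ⟨_, Measure.isAddInvariant_eq_smul_of_compactSpace _ _⟩
  have hk_ne : (k : ℝ) ≠ 0 := by
    intro h0
    rw [NNReal.coe_eq_zero] at h0
    apply hpos
    rw [← huniv, hk, h0, zero_smul, Measure.coe_zero, Pi.zero_apply]
  rw [← range_angleExp, ← measurableEmbedding_angleExp.map_comap, average_eq,
    measurableEmbedding_angleExp.integral_map, map_measureReal_apply
      measurableEmbedding_angleExp.measurable MeasurableSet.univ, preimage_univ, hk,
    integral_smul_nnreal_measure, measureReal_nnreal_smul_apply, measureReal_def,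
    AddCircle.measure_univ, ENNReal.toReal_ofReal two_pi_pos.le, NNReal.smul_def, smul_smul,
    ← AddCircle.intervalIntegral_preimage (2 * π) 0]
  simp only [angleExp_coe, zero_add, circleAverage_def]
  congr 1
  field_simp

theorem hausdorffMeasure_one_sphere_lt_top (c : ℂ) (R : ℝ) : μH[1] (sphere c R) < ⊤ := by
  have hcircle : μH[1] (circleMap c R '' Ioc 0 (2 * π)) < ⊤ := by
    refine ((lipschitzWith_circleMap c R).hausdorffMeasure_image_le zero_le_one _).trans_lt ?_
    rw [hausdorffMeasure_real, volume_Ioc]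
    finiteness
  refine (measure_mono ?_).trans_lt hcircle
  rw [image_circleMap_Ioc]
  exact fun z hz ↦ by rw [mem_sphere, ← mem_sphere.1 hz, abs_dist]

theorem hausdorffMeasure_one_sphere_pos (c : ℂ) {R : ℝ} (hR : 0 < R) :
    0 < μH[1] (sphere c R) := by
  have hconn : IsPreconnected (Complex.re '' sphere c R) :=
    (isPreconnected_sphere (by simp [Complex.rank_real_complex]) c R).image _
      Complex.continuous_re.continuousOn
  have hsub : Icc (c.re - R) (c.re + R) ⊆ Complex.re '' sphere c R :=
    hconn.Icc_subset ⟨c - R, by simp [hR.le], by simp⟩ ⟨c + R, by simp [hR.le], by simp⟩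
  calc 0 < volume (Icc (c.re - R) (c.re + R)) := by
        rw [volume_Icc, ENNReal.ofReal_pos]
        linarith
    _ ≤ μH[1] (Complex.re '' sphere c R) := by
      rw [hausdorffMeasure_real]
      exact measure_mono hsub
    _ ≤ μH[1] (sphere c R) := by
      simpa using RCLike.lipschitzWith_re (K := ℂ) |>.hausdorffMeasure_image_le zero_le_one
        (sphere c R)

theorem setAverage_hausdorffMeasure_sphere_eq_circleAverage {E : Type*} [NormedAddCommGroup E]
    [NormedSpace ℝ E] (f : ℂ → E) :
    ⨍ z in sphere 0 1, f z ∂μH[1] = circleAverage f 0 1 :=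
  setAverage_sphere_eq_circleAverage
    (fun a ↦ (rotation a).toIsometryEquiv.measurePreserving_hausdorffMeasure 1)
    (hausdorffMeasure_one_sphere_pos 0 one_pos).ne' (hausdorffMeasure_one_sphere_lt_top 0 1).ne f

end UnitCircle

section EuclideanPlane

theorem sphereMean_comp_linearIsometryEquiv {m : ℕ} {V : Type*} [NormedAddCommGroup V]
    [NormedSpace ℝ V] [MeasurableSpace V] [BorelSpace V] (e : V ≃ₗᵢ[ℝ] EuclideanSpace ℝ (Fin m))
    (u : EuclideanSpace ℝ (Fin m) → ℝ) (x : V) (r : ℝ) :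
    sphereMean m u (e x) r = ⨍ y in sphere (0 : V) 1, u (e (x + r • y)) ∂μH[(m : ℝ) - 1] := by
  have he : MeasurePreserving e μH[(m : ℝ) - 1] μH[(m : ℝ) - 1] :=
    e.toIsometryEquiv.measurePreserving_hausdorffMeasure _
  have hemb : MeasurableEmbedding e := e.toHomeomorph.measurableEmbedding
  have hsphere : e ⁻¹' sphere 0 1 = sphere 0 1 := by simp
  rw [sphereMean, setAverage_eq, setAverage_eq, ← he.setIntegral_preimage_emb hemb,
    ← he.measureReal_preimage isClosed_sphere.measurableSet.nullMeasurableSet, hsphere]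
  simp only [map_add, map_smul]

theorem sphereMean_two_eq_circleAverage (u : EuclideanSpace ℝ (Fin 2) → ℝ) (c : ℂ) (r : ℝ) :
    sphereMean 2 u (Complex.orthonormalBasisOneI.repr c) r =
      circleAverage (u ∘ Complex.orthonormalBasisOneI.repr) c r := by
  rw [sphereMean_comp_linearIsometryEquiv, circleAverage_eq_circleAverage_zero_one,
    ← setAverage_hausdorffMeasure_sphere_eq_circleAverage, Nat.cast_ofNat,
    show (2 : ℝ) - 1 = 1 by norm_num]
  simp only [Function.comp_apply, Complex.real_smul, add_comm]

theorem laplacian_eq_innerProductSpace_laplacian {m : ℕ} {u : EuclideanSpace ℝ (Fin m) → ℝ}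
    {x : EuclideanSpace ℝ (Fin m)} (hu : DifferentiableAt ℝ (fderiv ℝ u) x) :
    laplacian m u x = Δ u x := by
  rw [InnerProductSpace.laplacian_eq_iteratedFDeriv_orthonormalBasis u
    (EuclideanSpace.basisFun (Fin m) ℝ), laplacian]
  refine Finset.sum_congr rfl fun i _ ↦ ?_
  rw [fderiv_clm_apply hu (differentiableAt_const _), iteratedFDeriv_two_apply]
  simp

theorem laplacian_comp_linearIsometryEquiv {V W F : Type*} [NormedAddCommGroup V]
    [InnerProductSpace ℝ V] [FiniteDimensional ℝ V] [NormedAddCommGroup W] [InnerProductSpace ℝ W]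
    [FiniteDimensional ℝ W] [NormedAddCommGroup F] [NormedSpace ℝ F] (e : V ≃ₗᵢ[ℝ] W) (f : W → F)
    (x : V) : Δ (f ∘ e) x = Δ f (e x) := by
  have hcomp : iteratedFDeriv ℝ 2 (f ∘ e) x =
      (iteratedFDeriv ℝ 2 f (e x)).compContinuousLinearMap
        fun _ ↦ e.toContinuousLinearEquiv := by
    simp only [← iteratedFDerivWithin_univ]
    exact e.toContinuousLinearEquiv.iteratedFDerivWithin_comp_right f uniqueDiffOn_univ
      (mem_univ (e x)) 2
  rw [InnerProductSpace.laplacian_eq_iteratedFDeriv_stdOrthonormalBasis,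
    InnerProductSpace.laplacian_eq_iteratedFDeriv_orthonormalBasis f
      ((stdOrthonormalBasis ℝ V).map e)]
  refine Finset.sum_congr rfl fun i _ ↦ ?_
  rw [hcomp, ContinuousMultilinearMap.compContinuousLinearMap_apply]
  congr 1
  ext j
  fin_cases j <;> simp

theorem stmt_11_general {u : EuclideanSpace ℝ (Fin 2) → ℝ} {μ : ℝ} {x : EuclideanSpace ℝ (Fin 2)}
    {r : ℝ} (hr : 0 ≤ r) (hu : ContinuousOn u (closedBall x r))
    (hu_C2 : ContDiffOn ℝ 2 u (ball x r))
    (hu_pan : ∀ y ∈ ball x r, laplacian 2 u y - μ ^ 2 * u y = 0) :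
    sphereMean 2 u x r =
      u x * ((1 / Real.pi) * ∫ θ in (0 : ℝ)..Real.pi, Real.cosh (μ * r * Real.cos θ)) := by
  let e := Complex.orthonormalBasisOneI.repr
  obtain ⟨c, rfl⟩ := e.surjective x
  have hball : MapsTo e (ball c r) (ball (e c) r) := fun z hz ↦ by simpa using hz
  have hclosedBall : MapsTo e (closedBall c r) (closedBall (e c) r) := fun z hz ↦ by simpa using hz
  rw [sphereMean_two_eq_circleAverage]
  refine circleAverage_eq_mul_besselIZero hr (hu.comp e.continuous.continuousOn hclosedBall)
    (hu_C2.comp e.contDiff.contDiffOn hball) fun z hz ↦ ?_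
  have hC2 : ContDiffAt ℝ 2 u (e z) := hu_C2.contDiffAt (isOpen_ball.mem_nhds (hball hz))
  rw [laplacian_comp_linearIsometryEquiv, ← laplacian_eq_innerProductSpace_laplacian
    ((hC2.fderiv_right le_rfl).differentiableAt one_ne_zero)]
  exact sub_eq_zero.1 (hu_pan _ (hball hz))

end EuclideanPlane

/-- Duffin's mean value theorem: if `u` is panharmonic (`∇²u − μ²u = 0`) in a
domain `D ⊆ ℝ²`, then the circular mean satisfies
`M(x, r, u) = u(x) · (1/π) ∫_0^π cosh(μ r cos θ) dθ = I₀(μr) u(x)`. -/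
theorem stmt_11 (D : Set (EuclideanSpace ℝ (Fin 2)))
    (hD_open : IsOpen D) (hD_conn : IsConnected D)
    (u : EuclideanSpace ℝ (Fin 2) → ℝ)
    (hu_C2 : ContDiffOn ℝ 2 u D)
    (μ : ℝ) (hμ : μ ≠ 0)
    (hu_pan : ∀ x ∈ D, laplacian 2 u x - μ ^ 2 * u x = 0) :
    ∀ x ∈ D, ∀ r > (0 : ℝ), closedBall x r ⊆ D →
      sphereMean 2 u x r =
        u x * ((1 / Real.pi) * ∫ θ in (0 : ℝ)..Real.pi, Real.cosh (μ * r * Real.cos θ)) := by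
  exact fun x _ r hr hsub ↦ stmt_11_general hr.le (hu_C2.continuousOn.mono hsub)
    (hu_C2.mono (ball_subset_closedBall.trans hsub))
    fun y hy ↦ hu_pan y (hsub (ball_subset_closedBall hy))
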